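/- arXiv:1310.3265 — 2 statements merged into one kernel-verified Lean document; each statement's English description precedes it below -/
import Mathlib

section
/- Let q be a power of an odd prime, let n = (q² + 1)/2, and let β be a primitive 2n-th root of unity in F_{q⁴}. For an integer i with 1 ≤ i ≤ (n−1)/2, let C be the negacyclic code of length n over F_{q²} generated by g(x) = M^{(1)}(x)·M^{(3)}(x)·⋯·M^{(2i−1)}(x), where M^{(j)}(x) is the minimal polynomial of β^j over F_{q²}. Then C is an MDS code with parameters [n, n−2i, 2i+1]_{q²}: its dimension over F_{q²} is n−2i and its minimum Hamming distance equals 2i+1. -/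
open Polynomial

/-- The polynomial `c₀ + c₁ x + ⋯ + c_{n-1} x^{n-1}` associated to the vector `c`. -/
noncomputable def vecPoly {F : Type*} [Semiring F] {n : ℕ} (c : Fin n → F) : F[X] :=
  ∑ k : Fin n, Polynomial.C (c k) * X ^ (k : ℕ)

/-!
Put `Q = |F|`. Since `2n ∣ Q + 1`, the Frobenius map `x ↦ x ^ Q` inverts every power of `β`, so the
minimal polynomial of `β ^ (2j + 1)` is quadratic with second root `β ^ (-(2j + 1))`. The generator
therefore has degree `2i` and vanishes at the `2i` consecutive odd powers
`β ^ (1 - 2i), …, β⁻¹, β, …, β ^ (2i - 1)`, a geometric progression of ratio `β ^ 2`. By the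
BCH bound the minimum distance is at least `2i + 1`, and the generator is itself a codeword with
at most `2i + 1` nonzero coefficients.
-/

section Coefficients

variable {R : Type*} [Semiring R] {n : ℕ}

/-- The word of length `n` formed by the coefficients of `f` in degrees below `n`; higher
coefficients are dropped. On polynomials of degree below `n` it is inverse to `vecPoly`. -/
def coeffVec (n : ℕ) (f : R[X]) : Fin n → R := fun k => f.coeff k

theorem vecPoly_eq_degreeLTEquiv_symm (c : Fin n → R) :
    vecPoly c = ((degreeLTEquiv R n).symm c : R[X]) := by
  simp only [vecPoly, C_mul_X_pow_eq_monomial]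
  rfl

theorem degree_vecPoly_lt (c : Fin n → R) : (vecPoly c).degree < n := by
  rw [vecPoly_eq_degreeLTEquiv_symm, ← mem_degreeLT]
  exact Subtype.prop _

theorem coeffVec_vecPoly (c : Fin n → R) : coeffVec n (vecPoly c) = c := by
  rw [vecPoly_eq_degreeLTEquiv_symm]
  exact (degreeLTEquiv R n).apply_symm_apply c

theorem vecPoly_coeffVec {f : R[X]} (hf : f.degree < n) : vecPoly (coeffVec n f) = f := by
  rw [vecPoly_eq_degreeLTEquiv_symm]
  exact congrArg Subtype.val ((degreeLTEquiv R n).symm_apply_apply ⟨f, mem_degreeLT.2 hf⟩)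

theorem vecPoly_injective : Function.Injective (vecPoly : (Fin n → R) → R[X]) :=
  Function.LeftInverse.injective coeffVec_vecPoly

theorem aeval_vecPoly {R A : Type*} [CommSemiring R] [Semiring A] [Algebra R A] (c : Fin n → R)
    (x : A) : aeval x (vecPoly c) = ∑ k, algebraMap R A (c k) * x ^ (k : ℕ) := by
  simp only [vecPoly, map_sum, map_mul, aeval_C, map_pow, aeval_X]

theorem hammingNorm_coeffVec_le [DecidableEq R] (f : R[X]) :
    hammingNorm (coeffVec n f) ≤ f.natDegree + 1 := by
  refine le_trans ?_ f.card_supp_le_succ_natDegree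
  refine Finset.card_le_card_of_injOn Fin.val (fun k hk => ?_) Fin.val_injective.injOn
  rw [Finset.mem_coe, Finset.mem_filter_univ] at hk
  exact mem_support_iff.2 hk

end Coefficients

section Cardinality

theorem degree_monic_mul_lt_iff {R : Type*} [Semiring R] {g : R[X]} (hg : g.Monic)
    {f : R[X]} {m : ℕ} : (g * f).degree < (m + g.natDegree : ℕ) ↔ f.degree < m := by
  nontriviality R
  rw [hg.degree_mul_comm, hg.degree_mul, degree_eq_natDegree hg.ne_zero, Nat.cast_add,
    WithBot.add_lt_add_iff_right (WithBot.natCast_ne_bot _)]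

variable {R : Type*} [Ring R] {g : R[X]}

theorem range_coeffVec_mul_vecPoly (hg : g.Monic) (m : ℕ) :
    Set.range (fun a : Fin m → R => coeffVec (m + g.natDegree) (g * vecPoly a)) =
      {c | g ∣ vecPoly c} := by
  ext c
  constructor
  · rintro ⟨a, rfl⟩
    rw [Set.mem_ofPred_eq, vecPoly_coeffVec ((degree_monic_mul_lt_iff hg).2 (degree_vecPoly_lt a))]
    exact dvd_mul_right _ _
  · rintro ⟨f, hf⟩
    have hfm : f.degree < m := (degree_monic_mul_lt_iff hg).1 (hf ▸ degree_vecPoly_lt c)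
    exact ⟨coeffVec m f, by simp only [vecPoly_coeffVec hfm, ← hf, coeffVec_vecPoly]⟩

theorem coeffVec_mul_vecPoly_injective (hg : g.Monic) (m : ℕ) :
    Function.Injective fun a : Fin m → R => coeffVec (m + g.natDegree) (g * vecPoly a) := by
  intro a b hab
  have hmul := congrArg vecPoly hab
  simp only [vecPoly_coeffVec ((degree_monic_mul_lt_iff hg).2 (degree_vecPoly_lt _))] at hmul
  exact vecPoly_injective (hg.isRegular.left hmul)

theorem card_dvd_vecPoly (hg : g.Monic) {n : ℕ} (hgn : g.natDegree ≤ n) :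
    Nat.card {c : Fin n → R // g ∣ vecPoly c} = Nat.card R ^ (n - g.natDegree) := by
  obtain ⟨m, rfl⟩ := Nat.exists_eq_add_of_le' hgn
  rw [← Set.coe_ofPred, ← range_coeffVec_mul_vecPoly hg,
    Nat.card_range_of_injective (coeffVec_mul_vecPoly_injective hg m), Nat.card_fun, Nat.card_fin,
    Nat.add_sub_cancel]

end Cardinality

section BCHBound

theorem eq_zero_of_forall_sum_mul_pow_eq_zero {ι R : Type*} [CommRing R] [IsDomain R]
    {s : Finset ι} {v f : ι → R} (hf : Set.InjOn f s)
    (h : ∀ j < s.card, ∑ k ∈ s, v k * f k ^ j = 0) {k : ι} (hk : k ∈ s) : v k = 0 := by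
  have hinj : Function.Injective fun a : Fin s.card => f (s.equivFin.symm a) :=
    hf.injective.comp s.equivFin.symm.injective
  have hzero : (fun a : Fin s.card => v (s.equivFin.symm a)) = 0 := by
    refine Matrix.eq_zero_of_forall_pow_sum_mul_pow_eq_zero hinj fun j => ?_
    rw [s.equivFin.symm.sum_comp (fun a : s => v a * f a ^ (j : ℕ)),
      Finset.sum_coe_sort s fun a => v a * f a ^ (j : ℕ)]
    exact h j j.2
  simpa using congrFun hzero (s.equivFin ⟨k, hk⟩)

variable {F E : Type*} [CommSemiring F] [CommRing E] [IsDomain E] [Algebra F E] [FaithfulSMul F E]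
  [DecidableEq F] {n : ℕ} {δ ζ : E}

theorem lt_hammingNorm_of_aeval_eq_zero {d : ℕ} (hδ : δ ≠ 0)
    (hζ : Set.InjOn (ζ ^ ·) (Set.Iio n)) {c : Fin n → F} (hc : c ≠ 0)
    (h : ∀ j < d, aeval (δ * ζ ^ j) (vecPoly c) = 0) : d < hammingNorm c := by
  by_contra! hd
  let s : Finset (Fin n) := {k | c k ≠ 0}
  obtain ⟨k, hk⟩ := Function.ne_iff.mp hc
  have hf : Set.InjOn (fun k : Fin n => ζ ^ (k : ℕ)) s := fun a _ b _ hab =>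
    Fin.ext (hζ a.2 b.2 hab)
  have hsum : ∀ j < s.card,
      ∑ k ∈ s, algebraMap F E (c k) * δ ^ (k : ℕ) * (ζ ^ (k : ℕ)) ^ j = 0 := by
    intro j hj
    rw [← h j (hj.trans_le hd), aeval_vecPoly]
    refine Finset.sum_subset_zero_on_sdiff s.subset_univ (fun k hk => ?_) fun k _ => ?_
    · have hck : c k = 0 := by simpa [s] using hk
      rw [hck, map_zero, zero_mul]
    · rw [mul_pow, pow_right_comm, mul_assoc]
  have hmul : algebraMap F E (c k) * δ ^ (k : ℕ) = 0 :=
    eq_zero_of_forall_sum_mul_pow_eq_zero hf hsum (by simpa [s] using hk)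
  rw [mul_eq_zero_iff_right (pow_ne_zero _ hδ)] at hmul
  exact hk ((FaithfulSMul.algebraMap_eq_zero_iff F E).1 hmul)

variable {g : F[X]} (hδ : δ ≠ 0) (hζ : Set.InjOn (ζ ^ ·) (Set.Iio n))
  (hroots : ∀ j < g.natDegree, aeval (δ * ζ ^ j) g = 0)
include hδ hζ hroots

theorem natDegree_lt_hammingNorm_of_dvd_vecPoly {c : Fin n → F} (hgc : g ∣ vecPoly c)
    (hc : c ≠ 0) : g.natDegree < hammingNorm c :=
  lt_hammingNorm_of_aeval_eq_zero hδ hζ hc fun j hj =>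
    aeval_eq_zero_of_dvd_aeval_eq_zero hgc (hroots j hj)

theorem exists_dvd_vecPoly_hammingNorm_eq (hg : g ≠ 0) (hgn : g.natDegree < n) :
    ∃ c : Fin n → F, g ∣ vecPoly c ∧ c ≠ 0 ∧ hammingNorm c = g.natDegree + 1 := by
  have hvec : vecPoly (coeffVec n g) = g :=
    vecPoly_coeffVec ((natDegree_lt_iff_degree_lt hg).1 hgn)
  have hne : coeffVec n g ≠ 0 := fun h => hg <| by rw [← hvec, h]; simp [vecPoly]
  exact ⟨coeffVec n g, hvec.symm.dvd, hne, (hammingNorm_coeffVec_le g).antisymm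
    (natDegree_lt_hammingNorm_of_dvd_vecPoly hδ hζ hroots hvec.symm.dvd hne)⟩

end BCHBound

section FrobeniusConjugates

variable {F : Type*} [Field F] [Fintype F]

theorem aeval_pow_card_eq_zero {A : Type*} [CommRing A] [Algebra F A] {f : F[X]} {x : A}
    (hx : aeval x f = 0) : aeval (x ^ Fintype.card F) f = 0 := by
  rw [← FiniteField.frobeniusAlgHom_apply F A, aeval_algHom_apply, hx, map_zero]

theorem natDegree_minpoly_eq_prime {A : Type*} [CommRing A] [IsDomain A] [Algebra F A] {r : ℕ}
    (hr : r.Prime) {x : A} (hx : x ^ Fintype.card F ^ r = x) (hx1 : x ^ Fintype.card F ≠ x) :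
    (minpoly F x).natDegree = r := by
  have hroot : aeval x (X ^ Fintype.card F ^ r - X : F[X]) = 0 := by simp [hx]
  have hint : IsIntegral F x := IsAlgebraic.isIntegral
    ⟨_, FiniteField.X_pow_card_pow_sub_X_ne_zero F hr.ne_zero Fintype.one_lt_card, hroot⟩
  have hdvd : (minpoly F x).natDegree ∣ r := by
    apply (minpoly.irreducible hint).natDegree_dvd_of_dvd_X_pow_card_pow_sub_X
    rw [Nat.card_eq_fintype_card]
    exact minpoly.dvd F x hroot
  refine ((Nat.dvd_prime hr).1 hdvd).resolve_left fun h => hx1 ?_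
  obtain ⟨y, rfl⟩ := minpoly.natDegree_eq_one_iff.1 h
  rw [← map_pow, FiniteField.pow_card]

theorem natDegree_minpoly_eq_two {E : Type*} [Field E] [Algebra F E] {x : E}
    (hx : x ^ (Fintype.card F + 1) = 1) (hx2 : x ^ 2 ≠ 1) : (minpoly F x).natDegree = 2 := by
  have hinv : x ^ Fintype.card F = x⁻¹ := eq_inv_of_mul_eq_one_left (by rwa [← pow_succ])
  refine natDegree_minpoly_eq_prime Nat.prime_two ?_ fun h => hx2 ?_
  · rw [sq, pow_mul, hinv, inv_pow, hinv, inv_inv]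
  · rw [sq]
    nth_rw 1 [← h]
    rwa [← pow_succ]

end FrobeniusConjugates

section Generator

variable {F E : Type*} [Field F] [Field E] [Algebra F E]

variable (F) in
/-- The generator polynomial `M⁽¹⁾ M⁽³⁾ ⋯ M⁽²ⁱ⁻¹⁾` of the negacyclic code, where `M⁽ʲ⁾` is the
minimal polynomial of `β ^ j` over `F`. -/
noncomputable def negacyclicGenerator (β : E) (i : ℕ) : F[X] :=
  ∏ j ∈ Finset.range i, minpoly F (β ^ (2 * j + 1))

theorem aeval_negacyclicGenerator (β : E) {i j : ℕ} (hj : j < i) :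
    aeval (β ^ (2 * j + 1)) (negacyclicGenerator F β i) = 0 := by
  rw [negacyclicGenerator, map_prod]
  exact Finset.prod_eq_zero (Finset.mem_range.2 hj) (minpoly.aeval F _)

theorem monic_negacyclicGenerator {β : E} (hβ : IsIntegral F β) (i : ℕ) :
    (negacyclicGenerator F β i).Monic :=
  monic_prod_of_monic _ _ fun _ _ => minpoly.monic (hβ.pow _)

variable [Fintype F] {β : E}

theorem aeval_zpow_negacyclicGenerator (hβ : β ^ (Fintype.card F + 1) = 1) {i : ℕ} {k : ℤ}
    (hk : -i ≤ k) (hki : k < i) : aeval (β ^ (2 * k + 1)) (negacyclicGenerator F β i) = 0 := by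
  obtain ⟨j, rfl | rfl⟩ : ∃ j : ℕ, k = j ∨ k = -(j + 1) :=
    ⟨(max k (-(k + 1))).toNat, by omega⟩
  · exact_mod_cast aeval_negacyclicGenerator β (by omega : j < i)
  · have hinv : β ^ Fintype.card F = β⁻¹ := eq_inv_of_mul_eq_one_left (by rwa [← pow_succ])
    have hodd : 2 * -(j + 1 : ℤ) + 1 = -(2 * j + 1 : ℕ) := by omega
    rw [hodd, zpow_neg, zpow_natCast, ← inv_pow, ← hinv, pow_right_comm]
    exact aeval_pow_card_eq_zero (aeval_negacyclicGenerator β (by omega))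

theorem natDegree_negacyclicGenerator {n i : ℕ} (hn : 2 * n ∣ Fintype.card F + 1)
    (hβ : IsPrimitiveRoot β (2 * n)) (hi : 2 * i ≤ n) :
    (negacyclicGenerator F β i).natDegree = 2 * i := by
  have hβ1 : β ^ (Fintype.card F + 1) = 1 := (hβ.pow_eq_one_iff_dvd _).2 hn
  have hdeg : ∀ j ∈ Finset.range i, (minpoly F (β ^ (2 * j + 1))).natDegree = 2 := by
    intro j hj
    rw [Finset.mem_range] at hj
    refine natDegree_minpoly_eq_two (by rw [pow_right_comm, hβ1, one_pow]) ?_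
    rw [← pow_mul]
    exact hβ.pow_ne_one_of_pos_of_lt (by omega) (by omega)
  have hint : IsIntegral F β := .of_pow (Nat.succ_pos _) (hβ1 ▸ isIntegral_one)
  have hmonic : ∀ j ∈ Finset.range i, (minpoly F (β ^ (2 * j + 1))).Monic := fun _ _ =>
    minpoly.monic (hint.pow _)
  rw [negacyclicGenerator, natDegree_prod_of_monic _ _ hmonic, Finset.sum_congr rfl hdeg,
    Finset.sum_const, Finset.card_range, smul_eq_mul, mul_comm]

end Generator

theorem negacyclic_MDS_half_q2_plus_one_odd_general {F E : Type*} [Field F] [Field E]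
    [Algebra F E] [Fintype F] [DecidableEq F] {n i : ℕ} (hi : 2 * i < n)
    (hn : 2 * n ∣ Fintype.card F + 1) {β : E} (hβ : IsPrimitiveRoot β (2 * n)) :
    Nat.card {c : Fin n → F // negacyclicGenerator F β i ∣ vecPoly c} =
      Fintype.card F ^ (n - 2 * i) ∧
    (∀ c : Fin n → F, negacyclicGenerator F β i ∣ vecPoly c → c ≠ 0 →
      2 * i + 1 ≤ hammingNorm c) ∧
    (∃ c : Fin n → F, negacyclicGenerator F β i ∣ vecPoly c ∧ c ≠ 0 ∧
      hammingNorm c = 2 * i + 1) := by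
  have hβ1 : β ^ (Fintype.card F + 1) = 1 := (hβ.pow_eq_one_iff_dvd _).2 hn
  have hβ0 : β ≠ 0 := hβ.ne_zero (by omega)
  have hmonic : (negacyclicGenerator F β i).Monic :=
    monic_negacyclicGenerator ((hβ.isIntegral (by omega)).tower_top) i
  have hζ : Set.InjOn ((β ^ 2) ^ ·) (Set.Iio n) :=
    Finset.coe_range n ▸ (hβ.pow (by omega) rfl).injOn_pow
  have hroots : ∀ j < 2 * i,
      aeval (β ^ (1 - 2 * i : ℤ) * (β ^ 2) ^ j) (negacyclicGenerator F β i) = 0 := by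
    intro j hj
    have hpow : β ^ (1 - 2 * i : ℤ) * (β ^ 2) ^ j = β ^ (2 * (j - i : ℤ) + 1) := by
      rw [← pow_mul, ← zpow_natCast, ← zpow_add₀ hβ0]
      congr 1
      omega
    rw [hpow]
    exact aeval_zpow_negacyclicGenerator hβ1 (by omega) (by omega)
  have hdeg : (negacyclicGenerator F β i).natDegree = 2 * i :=
    natDegree_negacyclicGenerator hn hβ hi.le
  rw [← hdeg] at hi hroots ⊢
  exact ⟨Nat.card_eq_fintype_card (α := F) ▸ card_dvd_vecPoly hmonic hi.le,
    fun c => natDegree_lt_hammingNorm_of_dvd_vecPoly (zpow_ne_zero _ hβ0) hζ hroots,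
    exists_dvd_vecPoly_hammingNorm_eq (zpow_ne_zero _ hβ0) hζ hroots hmonic.ne_zero hi⟩

/-- Let `q` be a power of an odd prime, `n = (q² + 1)/2`, and `β` a
primitive `2n`-th root of unity in `E = F_{q⁴}`.  For `1 ≤ i ≤ (n-1)/2`, the
negacyclic code `C` of length `n` over `F = F_{q²}` generated by
`g = M^{(1)} · M^{(3)} ⋯ M^{(2i-1)}` is an MDS code with parameters
`[n, n-2i, 2i+1]_{q²}`: it has `(q²)^(n-2i)` codewords (dimension `n-2i`) and
minimum Hamming distance exactly `2i + 1`. -/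
theorem negacyclic_MDS_half_q2_plus_one_odd (p e q n i : ℕ) (hp : p.Prime)
    (hpodd : Odd p) (he : 0 < e) (hq : q = p ^ e)
    (hn : n = (q ^ 2 + 1) / 2) (hi1 : 1 ≤ i) (hi2 : i ≤ (n - 1) / 2)
    (F E : Type*) [Field F] [Field E] [Algebra F E]
    [Fintype F] [Fintype E] [DecidableEq F]
    (hF : Fintype.card F = q ^ 2) (hE : Fintype.card E = q ^ 4)
    (β : E) (hβ : orderOf β = 2 * n)
    (g : F[X]) (hg : g = ∏ j ∈ Finset.range i, minpoly F (β ^ (2 * j + 1))) :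
    Nat.card {c : Fin n → F // g ∣ vecPoly c} = (q ^ 2) ^ (n - 2 * i) ∧
    (∀ c : Fin n → F, g ∣ vecPoly c → c ≠ 0 → 2 * i + 1 ≤ hammingNorm c) ∧
    (∃ c : Fin n → F, g ∣ vecPoly c ∧ c ≠ 0 ∧ hammingNorm c = 2 * i + 1) := by
  have h2n : 2 * n = Fintype.card F + 1 := by
    rw [hF, hn, Nat.two_mul_div_two_of_even (hq ▸ hpodd.pow.pow.add_one)]
  subst hg
  exact hF ▸ negacyclic_MDS_half_q2_plus_one_odd_general (by omega) h2n.dvd (hβ ▸ .orderOf β)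
end

section
/- Let q be a power of an odd prime and let n = (q² + 1)/2. Let δ be an integer with 1 ≤ δ ≤ (q−1)/2 and let C be the q²-ary negacyclic code of length n whose defining set is Z = ∪_{i=1}^{δ} C_{2i−1}, the union of the q²-ary cyclotomic cosets modulo 2n of 1, 3, …, 2δ−1. Then C contains its Hermitian dual: C^{⊥h} ⊆ C. -/
/-!
Let `S` be a Frobenius-stable set of roots of `X ^ n - μ`, where `μ ^ (q + 1) = 1`, and let `C` be
the code of the words vanishing on `S`. For `y ∈ S`, the word `t ↦ Tr(a y ^ t) ^ q` lies in `C`: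
expanding the trace over the Frobenius conjugates, its value at `x ∈ S` is a combination of
geometric sums of ratios `x * z ^ q` with `z ∈ S` conjugate to `y`, and these sums vanish as soon as
no such ratio is `1`. Pairing a word `u` of the Hermitian dual with these words gives
`Tr(a * u(y)) = 0` for every `a`, so `u(y) = 0`.

For `n = (q ^ 2 + 1) / 2` and `μ = -1` one has `β ^ q ^ 2 = β⁻¹`, so the coset of `j` is `{j, -j}`
modulo `2 * n`, and the ratios are `β ^ (± i ± q * j)` with `0 < i, j < q`. These exponents are
nonzero and less than `q ^ 2 + 1` in absolute value.
-/

section HermitianDual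

variable {F E : Type*} [Field F] [Field E] [Algebra F E] {n : ℕ}

/-- The value at `x` of the word `c`, read as the polynomial `c₀ + c₁ X + ⋯ + cₙ₋₁ X ^ (n - 1)`. -/
def wordEval (c : Fin n → F) (x : E) : E :=
  ∑ t : Fin n, algebraMap F E (c t) * x ^ (t : ℕ)

variable (F n) in
/-- The code over `F` of length `n` with root set `S`: the words, read as polynomials, that vanish
on `S`. The roots may lie in an extension of `F`. -/
def rootCode (S : Set E) : Set (Fin n → F) :=
  {c | ∀ x ∈ S, wordEval c x = 0}

/-- The Hermitian dual of a set of words over a field with `q ^ 2` elements, where conjugation is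
`x ↦ x ^ q`. -/
def hermitianDual (q : ℕ) (C : Set (Fin n → F)) : Set (Fin n → F) :=
  {u | ∀ c ∈ C, ∑ t, u t * c t ^ q = 0}

theorem wordEval_pow (c : Fin n → F) (x : E) (m : ℕ) :
    wordEval c (x ^ m) = ∑ t : Fin n, algebraMap F E (c t) * x ^ ((t : ℕ) * m) := by
  simp only [wordEval, ← pow_mul, mul_comm m]

theorem sum_pow_of_dvd_card [Fintype F] {q : ℕ} (hq : q ∣ Fintype.card F) {ι : Type*}
    (s : Finset ι) (f : ι → E) : (∑ i ∈ s, f i) ^ q = ∑ i ∈ s, f i ^ q := by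
  obtain ⟨p, _, m, hp, hcard⟩ := FiniteField.card' F
  obtain ⟨k, -, rfl⟩ := (Nat.dvd_prime_pow hp).1 (hcard ▸ hq)
  have := Fact.mk hp
  have : CharP E p := charP_of_injective_algebraMap (algebraMap F E).injective p
  exact sum_pow_char_pow p k s f

theorem geom_sum_eq_zero_of_pow_eq_one {x : E} (hx : x ^ n = 1) (hne : x ≠ 1) :
    ∑ t : Fin n, x ^ (t : ℕ) = 0 := by
  rw [Fin.sum_univ_eq_sum_range (x ^ ·), geom_sum_eq hne, hx, sub_self, zero_div]

section Trace

variable {K : Type*} [Field K] [Algebra F K] [Algebra K E] [IsScalarTower F K E]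

theorem wordEval_trace_pow_eq_zero [Fintype F] [Finite K] {q : ℕ} (hq : q ∣ Fintype.card F)
    (a y : K) {x : E}
    (hx : ∀ k, ∑ t : Fin n, (x * (algebraMap K E y ^ Fintype.card F ^ k) ^ q) ^ (t : ℕ) = 0) :
    wordEval (fun t : Fin n => Algebra.trace F K (a * y ^ (t : ℕ)) ^ q) x = 0 := by
  have hconj (z : K) : algebraMap F E (Algebra.trace F K z ^ q) =
      ∑ k ∈ Finset.range (Module.finrank F K), (algebraMap K E z ^ Fintype.card F ^ k) ^ q := by
    rw [IsScalarTower.algebraMap_apply F K E, map_pow, FiniteField.algebraMap_trace_eq_sum_pow,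
      sum_pow_of_dvd_card hq, Nat.card_eq_fintype_card]
    simp only [map_sum, map_pow]
  simp only [wordEval, hconj, Finset.sum_mul]
  rw [Finset.sum_comm]
  refine Finset.sum_eq_zero fun k _ => ?_
  calc ∑ t : Fin n, (algebraMap K E (a * y ^ (t : ℕ)) ^ Fintype.card F ^ k) ^ q * x ^ (t : ℕ)
    _ = (algebraMap K E a ^ Fintype.card F ^ k) ^ q *
          ∑ t : Fin n, (x * (algebraMap K E y ^ Fintype.card F ^ k) ^ q) ^ (t : ℕ) := by
      rw [Finset.mul_sum]
      refine Finset.sum_congr rfl fun t _ => ?_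
      rw [map_mul, map_pow]
      ring
    _ = 0 := by rw [hx, mul_zero]

theorem wordEval_eq_zero_of_forall_trace [FiniteDimensional F K] [Algebra.IsSeparable F K]
    {u : Fin n → F} {y : K}
    (h : ∀ a : K, ∑ t, u t * Algebra.trace F K (a * y ^ (t : ℕ)) = 0) :
    wordEval u (algebraMap K E y) = 0 := by
  have huy : wordEval u y = 0 := by
    refine (traceForm_nondegenerate F K).1 _ fun a => ?_
    rw [Algebra.traceForm_apply, mul_comm, wordEval, Finset.mul_sum, map_sum, ← h a]
    refine Finset.sum_congr rfl fun t _ => ?_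
    rw [mul_left_comm, ← Algebra.smul_def, map_smul, smul_eq_mul]
  calc wordEval u (algebraMap K E y) = algebraMap K E (wordEval u y) := by
        simp only [wordEval, map_sum, map_mul, map_pow, ← IsScalarTower.algebraMap_apply F K E]
    _ = 0 := by rw [huy, map_zero]

end Trace

open IntermediateField in
theorem hermitianDual_rootCode_subset [Fintype F] {q : ℕ} (hF : Fintype.card F = q ^ 2)
    {S : Set E} {μ : E} (hμ : μ ^ (q + 1) = 1) (hroot : ∀ x ∈ S, x ^ n = μ)
    (hfrob : ∀ x ∈ S, x ^ q ^ 2 ∈ S) (hne : ∀ x ∈ S, ∀ y ∈ S, x * y ^ q ≠ 1) :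
    hermitianDual q (rootCode F n S) ⊆ rootCode F n S := by
  intro u hu y hy
  obtain rfl | hn := n.eq_zero_or_pos
  · simp only [wordEval, Finset.univ_eq_empty, Finset.sum_empty]
  have hint : IsIntegral F y := .of_pow (n := n * (q + 1)) (by positivity) <| by
    rw [pow_mul, hroot y hy, hμ]
    exact isIntegral_one
  have hgeom (x : E) (hx : x ∈ S) (z : E) (hz : z ∈ S) :
      ∑ t : Fin n, (x * z ^ q) ^ (t : ℕ) = 0 :=
    geom_sum_eq_zero_of_pow_eq_one
      (by rw [mul_pow, pow_right_comm, hroot x hx, hroot z hz, ← pow_succ', hμ]) (hne x hx z hz)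
  have hfrob_iterate (k : ℕ) : y ^ Fintype.card F ^ k ∈ S := by
    simpa only [hF, pow_iterate] using Set.MapsTo.iterate hfrob k hy
  have := adjoin.finiteDimensional hint
  have : Finite F⟮y⟯ := Module.finite_of_finite F
  have hdvd : q ∣ Fintype.card F := hF ▸ dvd_pow_self q two_ne_zero
  refine wordEval_eq_zero_of_forall_trace (y := AdjoinSimple.gen F y) fun a => ?_
  have hword := hu _ fun x hx => wordEval_trace_pow_eq_zero hdvd a (AdjoinSimple.gen F y)
    fun k => hgeom x hx _ (hfrob_iterate k)
  simpa only [← pow_mul, ← sq, ← hF, FiniteField.pow_card] using hword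

end HermitianDual

section CyclotomicCosets

variable {E : Type*} [Field E] {q : ℕ} {β : E}

/-- The powers of `β` whose exponents run over the `Q`-ary cyclotomic cosets of the elements of
`J`. -/
def cosetRoots (β : E) (Q : ℕ) (J : Set ℕ) : Set E :=
  {x | ∃ j ∈ J, ∃ k, x = β ^ (j * Q ^ k)}

theorem mem_rootCode_cosetRoots {F : Type*} [Field F] [Algebra F E] {n Q : ℕ} {J : Set ℕ}
    {c : Fin n → F} : c ∈ rootCode F n (cosetRoots β Q J) ↔
      ∀ j ∈ J, ∀ k, wordEval c (β ^ (j * Q ^ k)) = 0 := by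
  constructor
  · exact fun h j hj k => h _ ⟨j, hj, k, rfl⟩
  · rintro h _ ⟨j, hj, k, rfl⟩
    exact h j hj k

theorem pow_mem_cosetRoots {Q : ℕ} {J : Set ℕ} {x : E} (hx : x ∈ cosetRoots β Q J) :
    x ^ Q ∈ cosetRoots β Q J := by
  obtain ⟨j, hj, k, rfl⟩ := hx
  exact ⟨j, hj, k + 1, by rw [← pow_mul, mul_assoc, pow_succ]⟩

theorem not_sq_add_one_dvd_add_mul {q i j : ℤ} (hi : i ≠ 0) (hiq : |i| < q) (hjq : |j| < q) :
    ¬ q ^ 2 + 1 ∣ i + q * j := by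
  intro h
  have hsmall : |i + q * j| < q ^ 2 + 1 := by
    calc |i + q * j| ≤ |i| + q * |j| := by
          simpa only [abs_mul, abs_of_pos ((abs_nonneg i).trans_lt hiq)] using abs_add_le i (q * j)
      _ < q ^ 2 + 1 := by nlinarith [abs_nonneg i]
  have hsum : i + q * j = 0 := Int.eq_zero_of_abs_lt_dvd h hsmall
  exact hi (Int.eq_zero_of_abs_lt_dvd ⟨-j, by linarith⟩ hiq)

theorem exists_zpow_eq_of_mem_cosetRoots (hβ : β ^ (q ^ 2 + 1) = 1) {J : Set ℕ} {x : E}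
    (hx : x ∈ cosetRoots β (q ^ 2) J) : ∃ z : ℤ, z.natAbs ∈ J ∧ x = β ^ z := by
  obtain ⟨j, hj, k, rfl⟩ := hx
  have hinv : β ^ q ^ 2 = β⁻¹ := eq_inv_of_mul_eq_one_left (by rw [← pow_succ, hβ])
  have hsign : β ^ (q ^ 2) ^ k = β ^ ((-1) ^ k : ℤ) := by
    induction k with
    | zero => simp
    | succ k ih =>
      rw [pow_succ, pow_mul, ih, ← zpow_natCast, zpow_comm, zpow_natCast, hinv, inv_zpow',
        pow_succ, mul_neg_one]
  refine ⟨j * (-1) ^ k, ?_, ?_⟩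
  · simpa [Int.natAbs_mul, Int.natAbs_pow] using hj
  · rw [mul_comm, pow_mul, hsign, mul_comm, zpow_mul, zpow_natCast]

theorem mul_pow_ne_one_of_mem_cosetRoots (hβ : IsPrimitiveRoot β (q ^ 2 + 1)) {J : Set ℕ}
    (hJ : ∀ j ∈ J, j ≠ 0 ∧ j < q) {x y : E} (hx : x ∈ cosetRoots β (q ^ 2) J)
    (hy : y ∈ cosetRoots β (q ^ 2) J) : x * y ^ q ≠ 1 := by
  obtain ⟨i, hi, rfl⟩ := exists_zpow_eq_of_mem_cosetRoots hβ.pow_eq_one hx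
  obtain ⟨j, hj, rfl⟩ := exists_zpow_eq_of_mem_cosetRoots hβ.pow_eq_one hy
  have hβ0 : β ≠ 0 := hβ.ne_zero (Nat.succ_ne_zero _)
  rw [← zpow_natCast, ← zpow_mul, ← zpow_add₀ hβ0, mul_comm j, Ne, hβ.zpow_eq_one_iff_dvd]
  obtain ⟨hi0, hiq⟩ := hJ _ hi
  obtain ⟨-, hjq⟩ := hJ _ hj
  push_cast
  refine not_sq_add_one_dvd_add_mul (Int.natAbs_ne_zero.1 hi0) ?_ ?_ <;>
    rwa [Int.abs_eq_natAbs, Nat.cast_lt]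

theorem pow_eq_neg_one_of_mem_cosetRoots {n Q : ℕ} (hn : n ≠ 0) (hβ : IsPrimitiveRoot β (2 * n))
    (hQ : Odd Q) {J : Set ℕ} (hJ : ∀ j ∈ J, Odd j) {x : E} (hx : x ∈ cosetRoots β Q J) :
    x ^ n = -1 := by
  obtain ⟨j, hj, k, rfl⟩ := hx
  have hβn : β ^ n = -1 := (hβ.pow (by positivity) (mul_comm 2 n)).eq_neg_one_of_two_right
  rw [pow_right_comm, hβn, ((hJ j hj).mul hQ.pow).neg_one_pow]

end CyclotomicCosets

theorem hermitianDual_rootCode_cosetRoots_subset {F E : Type*} [Field F] [Field E] [Algebra F E]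
    [Fintype F] {q n : ℕ} (hF : Fintype.card F = q ^ 2) (hq : Odd q) (hn : 2 * n = q ^ 2 + 1)
    {β : E} (hβ : IsPrimitiveRoot β (2 * n)) {J : Set ℕ} (hJ : ∀ j ∈ J, Odd j ∧ j < q) :
    hermitianDual q (rootCode F n (cosetRoots β (q ^ 2) J)) ⊆
      rootCode F n (cosetRoots β (q ^ 2) J) :=
  hermitianDual_rootCode_subset hF hq.add_one.neg_one_pow
    (fun _ => pow_eq_neg_one_of_mem_cosetRoots (by omega) hβ hq.pow fun j hj => (hJ j hj).1)
    (fun _ => pow_mem_cosetRoots)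
    (fun _ hx _ hy => mul_pow_ne_one_of_mem_cosetRoots (hn ▸ hβ)
      (fun j hj => ⟨(hJ j hj).1.pos.ne', (hJ j hj).2⟩) hx hy)

/-- Let `q` be a power of an odd prime, `n = (q² + 1)/2`, and
`1 ≤ δ ≤ (q-1)/2`.  Let `C` be the `q²`-ary negacyclic code of length `n` with
defining set `Z = ∪_{i=1}^{δ} C_{2i-1}` (union of `q²`-ary cyclotomic cosets modulo
`2n`), i.e. `c ∈ C` iff `c(β^j) = 0` for every `j ∈ Z`, where `β` is a fixed
primitive `2n`-th root of unity in an extension `E` of `F = F_{q²}`.  Then `C`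
contains its Hermitian dual: `C^{⊥h} ⊆ C`. -/
theorem negacyclic_hermitian_dual_containing_half_q2_plus_one (p e q n δ : ℕ)
    (hp : p.Prime) (hpodd : Odd p) (he : 0 < e) (hq : q = p ^ e)
    (hn : n = (q ^ 2 + 1) / 2) (hδ1 : 1 ≤ δ) (hδ2 : δ ≤ (q - 1) / 2)
    (F E : Type*) [Field F] [Field E] [Algebra F E] [Fintype F]
    (hF : Fintype.card F = q ^ 2)
    (β : E) (hβ : orderOf β = 2 * n)
    (C : Set (Fin n → F))
    (hC : C = {c | ∀ i, 1 ≤ i → i ≤ δ → ∀ k : ℕ,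
      ∑ t : Fin n, algebraMap F E (c t) * β ^ ((t : ℕ) * ((2 * i - 1) * q ^ (2 * k))) = 0}) :
    {u : Fin n → F | ∀ c ∈ C, ∑ t : Fin n, u t * (c t) ^ q = 0} ⊆ C := by
  have hqodd : Odd q := hq ▸ hpodd.pow
  have h2n : 2 * n = q ^ 2 + 1 := hn ▸ Nat.mul_div_cancel' hqodd.pow.add_one.two_dvd
  have hcode : C = rootCode F n (cosetRoots β (q ^ 2) ((2 * · - 1) '' Set.Icc 1 δ)) := by
    ext c
    simp only [hC, mem_rootCode_cosetRoots, wordEval_pow, Set.forall_mem_image, Set.mem_Icc,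
      and_imp, Set.mem_ofPred_eq, pow_mul q]
  rw [hcode]
  refine hermitianDual_rootCode_cosetRoots_subset hF hqodd h2n (hβ ▸ IsPrimitiveRoot.orderOf β) ?_
  rintro _ ⟨i, ⟨hi, hiδ⟩, rfl⟩
  exact ⟨Nat.Even.sub_odd (by omega) (even_two_mul i) odd_one, by grind⟩
end
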